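/- Let B be a nonidentity Pauli string on n qubits, ρ₀ a pure state, and define X(U,V) = (1/2)Tr[ρ₀ {U† B U, V† B V}] for independent Haar-random U, V ∈ U(2ⁿ). Then E[X] = 0 and E[X²] = (2ⁿ/(2(2^{2n}−1)))·(1 + (2ⁿ−2)/(2ⁿ(2ⁿ+1))), which is asymptotically 1/2^{n+1}. -/

import Mathlib

open MeasureTheory Matrix
open scoped ComplexOrder

/-- The four single-qubit Pauli matrices `I, X, Y, Z`. -/
noncomputable def pauli : Fin 4 → Matrix (Fin 2) (Fin 2) ℂ
  | 0 => 1
  | 1 => !![0, 1; 1, 0]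
  | 2 => !![0, -Complex.I; Complex.I, 0]
  | 3 => !![1, 0; 0, -1]

/-- The `n`-qubit Pauli string `⊗_q pauli (s q)` (entrywise tensor-product formula). -/
noncomputable def pauliString {n : ℕ} (s : Fin n → Fin 4) :
    Matrix (Fin n → Fin 2) (Fin n → Fin 2) ℂ :=
  fun i j => ∏ q : Fin n, pauli (s q) (i q) (j q)

/-- The single-parameter ALD quantum Fisher kernel term
`X(U,V) = (1/2)·Tr[ρ₀ {U† B U, V† B V}]`. -/
noncomputable def aldTerm {n : ℕ} (s : Fin n → Fin 4)
    (ρ₀ : Matrix (Fin n → Fin 2) (Fin n → Fin 2) ℂ)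
    (U V : Matrix (Fin n → Fin 2) (Fin n → Fin 2) ℂ) : ℂ :=
  (1 / 2 : ℂ) * (ρ₀ * (star U * pauliString s * U * (star V * pauliString s * V) +
    star V * pauliString s * V * (star U * pauliString s * U))).trace


section Helpers

set_option linter.unusedSectionVars false

variable {ι : Type*} [Fintype ι] [DecidableEq ι]

lemma hm_compact : CompactSpace (unitaryGroup ι ℂ) := by
  apply isCompact_iff_compactSpace.1
  have h1 : IsClosed ((unitaryGroup ι ℂ : Set (Matrix ι ι ℂ))) := by
    have : (unitaryGroup ι ℂ : Set (Matrix ι ι ℂ)) = {A | A * star A = 1} := by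
      ext A; exact mem_unitaryGroup_iff
    rw [this]
    exact isClosed_eq (by fun_prop) continuous_const
  have hK : IsCompact (Set.pi Set.univ (fun _ : ι => Set.pi Set.univ
      (fun _ : ι => Metric.closedBall (0 : ℂ) 1))) :=
    isCompact_univ_pi fun _ => isCompact_univ_pi fun _ => isCompact_closedBall _ _
  refine IsCompact.of_isClosed_subset hK h1 ?_
  intro A hA i _ j _
  simpa using entry_norm_bound_of_unitary hA i j

lemma hm_second : SecondCountableTopology (unitaryGroup ι ℂ) := by
  have : SecondCountableTopology (Matrix ι ι ℂ) :=
    inferInstanceAs (SecondCountableTopology (ι → ι → ℂ))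
  exact TopologicalSpace.Subtype.secondCountableTopology (unitaryGroup ι ℂ : Set (Matrix ι ι ℂ))

variable [MeasurableSpace (unitaryGroup ι ℂ)] [BorelSpace (unitaryGroup ι ℂ)]
  (μ : Measure (unitaryGroup ι ℂ)) [μ.IsHaarMeasure] [IsProbabilityMeasure μ]

lemma hm_right (W : unitaryGroup ι ℂ) : μ.map (· * W) = μ := by
  have := hm_compact (ι := ι)
  have : IsProbabilityMeasure (μ.map (· * W)) :=
    Measure.isProbabilityMeasure_map (by fun_prop)
  have h := Measure.isMulInvariant_eq_smul_of_compactSpace (μ.map (· * W)) μ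
  have h2 := congrArg (fun m : Measure (unitaryGroup ι ℂ) => m Set.univ) h
  simp only [measure_univ, Measure.smul_apply] at h2
  rw [h]
  have h3 : (Measure.haarScalarFactor (μ.map (· * W)) μ) = 1 := by
    have : ((Measure.haarScalarFactor (μ.map (· * W)) μ : NNReal) : ENNReal) = 1 := by
      rw [h2]; simp [ENNReal.smul_def]
    exact_mod_cast this
  rw [h3, one_smul]

lemma hm_integral_right (f : unitaryGroup ι ℂ → ℂ) (W : unitaryGroup ι ℂ) :
    ∫ V, f (V * W) ∂μ = ∫ V, f V ∂μ := by
  conv_rhs => rw [← hm_right μ W]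
  exact ((MeasurableEquiv.mulRight W).measurableEmbedding.integral_map f).symm

lemma hm_integrable (f : unitaryGroup ι ℂ → ℂ) (hf : Continuous f) : Integrable f μ := by
  have := hm_compact (ι := ι)
  exact hf.integrable_of_hasCompactSupport (HasCompactSupport.of_compactSpace f)

/-- conjugated observable -/
def hmC (B : Matrix ι ι ℂ) (V : unitaryGroup ι ℂ) : Matrix ι ι ℂ :=
  star (V : Matrix ι ι ℂ) * B * (V : Matrix ι ι ℂ)

lemma hmC_cont (B : Matrix ι ι ℂ) : Continuous (hmC B) := by
  unfold hmC; fun_prop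

lemma hmC_mul (B : Matrix ι ι ℂ) (V W : unitaryGroup ι ℂ) :
    hmC B (V * W) = star (W : Matrix ι ι ℂ) * hmC B V * (W : Matrix ι ι ℂ) := by
  simp [hmC, Matrix.mul_assoc]

lemma hmC_trace (B : Matrix ι ι ℂ) (V : unitaryGroup ι ℂ) : (hmC B V).trace = B.trace := by
  unfold hmC
  rw [Matrix.trace_mul_comm, ← Matrix.mul_assoc, mem_unitaryGroup_iff.1 V.2, Matrix.one_mul]

lemma hmC_sq (B : Matrix ι ι ℂ) (hB : B * B = 1) (V : unitaryGroup ι ℂ) :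
    hmC B V * hmC B V = 1 := by
  unfold hmC
  have h1 := mem_unitaryGroup_iff.1 V.2
  have h2 := mem_unitaryGroup_iff'.1 V.2
  calc star (V : Matrix ι ι ℂ) * B * V * (star (V : Matrix ι ι ℂ) * B * V)
      = star (V : Matrix ι ι ℂ) * B * (V * star (V : Matrix ι ι ℂ)) * B * V := by
        simp only [Matrix.mul_assoc]
    _ = 1 := by rw [h1, Matrix.mul_one, Matrix.mul_assoc _ B B, hB, Matrix.mul_one, h2]

/-- permutation unitary -/
def hmP (σ : Equiv.Perm ι) : unitaryGroup ι ℂ :=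
  ⟨(1 : Matrix ι ι ℂ).submatrix id σ, by
    rw [mem_unitaryGroup_iff, star_eq_conjTranspose, conjTranspose_submatrix, conjTranspose_one,
      submatrix_mul_equiv]
    simp⟩

lemma hmP_conj (σ : Equiv.Perm ι) (A : Matrix ι ι ℂ) (i j : ι) :
    (star (hmP σ : Matrix ι ι ℂ) * A * (hmP σ : Matrix ι ι ℂ)) i j = A (σ i) (σ j) := by
  simp [hmP, Matrix.mul_apply, Matrix.one_apply, star_apply, apply_ite]

lemma hm_diag1 (B : Matrix ι ι ℂ) (σ : Equiv.Perm ι) (i : ι) :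
    ∫ V, hmC B V (σ i) (σ i) ∂μ = ∫ V, hmC B V i i ∂μ := by
  rw [← hm_integral_right μ (fun V => hmC B V i i) (hmP σ)]
  simp only [hmC_mul, hmP_conj]

lemma hm_diag2 (B : Matrix ι ι ℂ) (σ : Equiv.Perm ι) (i k : ι) :
    ∫ V, hmC B V (σ i) (σ i) * hmC B V (σ k) (σ k) ∂μ
      = ∫ V, hmC B V i i * hmC B V k k ∂μ := by
  rw [← hm_integral_right μ (fun V => hmC B V i i * hmC B V k k) (hmP σ)]
  simp only [hmC_mul, hmP_conj]

lemma hm_two_trans (i k j l : ι) (h : i ≠ k) (h' : j ≠ l) :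
    ∃ σ : Equiv.Perm ι, σ i = j ∧ σ k = l := by
  refine ⟨Equiv.swap (Equiv.swap i j k) l * Equiv.swap i j, ?_, ?_⟩
  · have : j ≠ Equiv.swap i j k := by
      intro hh
      apply h
      apply (Equiv.swap i j).injective
      simpa using hh
    simp [Equiv.swap_apply_of_ne_of_ne this h']
  · simp

lemma hm_T (B : Matrix ι ι ℂ) [Nontrivial ι] : ∃ p q : ℂ, ∀ i k,
    ∫ V, hmC B V i i * hmC B V k k ∂μ = (if i = k then p else 0) + q := by
  obtain ⟨a, b, hab⟩ := exists_pair_ne ι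
  refine ⟨∫ V, hmC B V a a * hmC B V a a ∂μ - ∫ V, hmC B V a a * hmC B V b b ∂μ,
    ∫ V, hmC B V a a * hmC B V b b ∂μ, fun i k => ?_⟩
  split_ifs with h
  · subst h
    have := hm_diag2 μ B (Equiv.swap a i) a a
    simp only [Equiv.swap_apply_left] at this
    rw [this]; ring
  · obtain ⟨σ, h1, h2⟩ := hm_two_trans a b i k hab h
    have := hm_diag2 μ B σ a b
    rw [h1, h2] at this
    rw [this]; ring

lemma hm_spec (M : Matrix ι ι ℂ) (hM : M.IsHermitian) :
    ∃ (W : unitaryGroup ι ℂ) (D : ι → ℝ), M = (W : Matrix ι ι ℂ) *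
      diagonal (fun i => (D i : ℂ)) * star (W : Matrix ι ι ℂ) :=
  ⟨hM.eigenvectorUnitary, hM.eigenvalues, by
    conv_lhs => rw [hM.spectral_theorem]
    rfl⟩

lemma hm_trconj (W : unitaryGroup ι ℂ) (D C : Matrix ι ι ℂ) :
    ((W : Matrix ι ι ℂ) * D * star (W : Matrix ι ι ℂ) * C).trace =
      (D * (star (W : Matrix ι ι ℂ) * C * (W : Matrix ι ι ℂ))).trace := by
  rw [Matrix.mul_assoc, Matrix.mul_assoc, Matrix.trace_mul_comm]
  simp only [Matrix.mul_assoc]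

lemma hm_trdiag (D : ι → ℂ) (C : Matrix ι ι ℂ) :
    (diagonal D * C).trace = ∑ i, D i * C i i := by
  simp [Matrix.trace, Matrix.diagonal_mul]

lemma hm_entry_int (B : Matrix ι ι ℂ) (i j : ι) : Integrable (fun V => hmC B V i j) μ :=
  hm_integrable μ _ ((hmC_cont B).matrix_elem i j)

lemma hm_entry_int2 (B : Matrix ι ι ℂ) (i j k l : ι) :
    Integrable (fun V => hmC B V i j * hmC B V k l) μ :=
  hm_integrable μ _ (((hmC_cont B).matrix_elem i j).mul ((hmC_cont B).matrix_elem k l))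

lemma hm_first (B : Matrix ι ι ℂ) (hB : B.trace = 0) [Nonempty ι]
    (M : Matrix ι ι ℂ) (hM : M.IsHermitian) :
    ∫ V, (M * hmC B V).trace ∂μ = 0 := by
  obtain ⟨W, D, rfl⟩ := hm_spec M hM
  simp_rw [hm_trconj, ← hmC_mul]
  rw [hm_integral_right μ (fun V => (diagonal (fun i => (D i : ℂ)) * hmC B V).trace) W]
  simp_rw [hm_trdiag]
  rw [integral_finsetSum _ fun i _ => (hm_entry_int μ B i i).const_mul _]
  have key : ∀ i, ∫ V, hmC B V i i ∂μ = 0 := by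
    intro i
    have h1 : ∀ j, ∫ V, hmC B V j j ∂μ = ∫ V, hmC B V i i ∂μ := by
      intro j
      have := hm_diag1 μ B (Equiv.swap i j) i
      simpa only [Equiv.swap_apply_left] using this
    have h2 : ∑ j, ∫ V, hmC B V j j ∂μ = 0 := by
      rw [← integral_finsetSum _ fun i _ => hm_entry_int μ B i i]
      have : ∀ V, ∑ j, hmC B V j j = 0 := fun V => (hmC_trace B V).trans hB
      simp [this]
    simp_rw [h1] at h2
    simpa using h2
  simp [integral_const_mul, key]

lemma hm_second_pq (B : Matrix ι ι ℂ) [Nontrivial ι] : ∃ p q : ℂ, ∀ M : Matrix ι ι ℂ,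
    M.IsHermitian → ∫ V, (M * hmC B V).trace ^ 2 ∂μ = p * (M * M).trace + q * M.trace ^ 2 := by
  obtain ⟨p, q, hT⟩ := hm_T μ B
  refine ⟨p, q, fun M hM => ?_⟩
  obtain ⟨W, D, rfl⟩ := hm_spec M hM
  have hW := mem_unitaryGroup_iff'.1 W.2
  have e1 : ((W : Matrix ι ι ℂ) * diagonal (fun i => (D i : ℂ)) * star (W : Matrix ι ι ℂ)).trace
      = ∑ i, (D i : ℂ) := by
    rw [Matrix.trace_mul_comm, ← Matrix.mul_assoc, hW, Matrix.one_mul, Matrix.trace_diagonal]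
  have e2 : ((W : Matrix ι ι ℂ) * diagonal (fun i => (D i : ℂ)) * star (W : Matrix ι ι ℂ) *
      ((W : Matrix ι ι ℂ) * diagonal (fun i => (D i : ℂ)) * star (W : Matrix ι ι ℂ))).trace
      = ∑ i, (D i : ℂ) * D i := by
    rw [hm_trconj]
    have : star (W : Matrix ι ι ℂ) * ((W : Matrix ι ι ℂ) * diagonal (fun i => (D i : ℂ)) *
      star (W : Matrix ι ι ℂ)) * (W : Matrix ι ι ℂ) = diagonal (fun i => (D i : ℂ)) := by
      calc _ = (star (W : Matrix ι ι ℂ) * (W : Matrix ι ι ℂ)) * diagonal (fun i => (D i : ℂ)) *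
            (star (W : Matrix ι ι ℂ) * (W : Matrix ι ι ℂ)) := by simp only [Matrix.mul_assoc]
        _ = _ := by rw [hW, Matrix.one_mul, Matrix.mul_one]
    rw [this, hm_trdiag]
    simp
  rw [e1, e2]
  simp_rw [hm_trconj, ← hmC_mul]
  rw [hm_integral_right μ (fun V => (diagonal (fun i => (D i : ℂ)) * hmC B V).trace ^ 2) W]
  simp_rw [hm_trdiag, sq, Finset.sum_mul_sum]
  have e3 : ∀ (V : unitaryGroup ι ℂ) (i k : ι), (D i : ℂ) * hmC B V i i * (D k * hmC B V k k)
      = ((D i : ℂ) * D k) * (hmC B V i i * hmC B V k k) := fun V i k => by ring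
  simp_rw [e3]
  rw [integral_finsetSum _ fun i _ => integrable_finsetSum _ fun k _ =>
    (hm_entry_int2 μ B i i k k).const_mul _]
  simp_rw [integral_finsetSum _ fun k _ => (hm_entry_int2 μ B _ _ k k).const_mul _,
    integral_const_mul, hT, mul_add, Finset.sum_add_distrib, mul_ite, mul_zero]
  simp only [Finset.sum_ite_eq, Finset.mem_univ, if_true, Finset.mul_sum]
  congr 1
  · exact Finset.sum_congr rfl fun i _ => by ring
  · exact Finset.sum_congr rfl fun i _ => Finset.sum_congr rfl fun k _ => by ring

lemma hm_pq (B : Matrix ι ι ℂ) [Nontrivial ι] (hB : B.trace = 0) (hB2 : B * B = 1) :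
    ∃ p q : ℂ, (∀ M : Matrix ι ι ℂ,
    M.IsHermitian → ∫ V, (M * hmC B V).trace ^ 2 ∂μ = p * (M * M).trace + q * M.trace ^ 2) ∧
    p + q * (Fintype.card ι : ℂ) = 0 ∧ (Fintype.card ι : ℂ) * p + q = 1 := by
  obtain ⟨p, q, h⟩ := hm_second_pq μ B
  have hd : (Fintype.card ι : ℂ) ≠ 0 := by
    exact_mod_cast Fintype.card_ne_zero
  refine ⟨p, q, h, ?_, ?_⟩
  · have := h 1 isHermitian_one
    simp only [Matrix.one_mul, hmC_trace, hB, Matrix.trace_one] at this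
    simp only [ne_eq, OfNat.ofNat_ne_zero, not_false_eq_true, zero_pow, integral_zero] at this
    apply mul_left_cancel₀ hd
    linear_combination -this
  · obtain ⟨k⟩ : Nonempty ι := inferInstance
    have key : ∀ l, ∫ V, hmC B V k l * hmC B V l k ∂μ = p + if k = l then q else 0 := by
      intro l
      have h1 := h (single k l 1 + single l k 1) (by
        simp [IsHermitian, conjTranspose_add, conjTranspose_single, add_comm])
      have h2 := h (single k l Complex.I + single l k (-Complex.I)) (by
        simp [IsHermitian, conjTranspose_add, conjTranspose_single, add_comm])
      have c1 : Integrable (fun V => ((single k l 1 + single l k 1) * hmC B V).trace ^ 2) μ :=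
        hm_integrable μ _ (by have := hmC_cont B; fun_prop)
      have c2 : Integrable (fun V => ((single k l Complex.I + single l k (-Complex.I)) *
          hmC B V).trace ^ 2) μ :=
        hm_integrable μ _ (by have := hmC_cont B; fun_prop)
      have h3 := integral_add c1 c2
      rw [h1, h2] at h3
      have e : ∀ V, ((single k l 1 + single l k 1) * hmC B V).trace ^ 2 +
          ((single k l Complex.I + single l k (-Complex.I)) * hmC B V).trace ^ 2
          = 4 * (hmC B V k l * hmC B V l k) := by
        intro V
        simp only [Matrix.add_mul, Matrix.trace_add, Matrix.trace_single_mul]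
        simp only [smul_eq_mul]
        linear_combination (hmC B V l k - hmC B V k l) ^ 2 * Complex.I_sq
      simp_rw [e] at h3
      rw [integral_const_mul] at h3
      apply mul_left_cancel₀ (four_ne_zero' ℂ)
      rw [h3]
      by_cases hkl : k = l
      · subst hkl
        simp [Matrix.add_mul, Matrix.mul_add]
        ring
      · have hlk : l ≠ k := fun hh => hkl hh.symm
        simp [Matrix.add_mul, Matrix.mul_add, hkl, hlk]
        ring
    have h4 : ∑ l, ∫ V, hmC B V k l * hmC B V l k ∂μ = 1 := by
      rw [← integral_finsetSum _ fun l _ => hm_entry_int2 μ B k l l k]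
      have : ∀ V, ∑ l, hmC B V k l * hmC B V l k = 1 := fun V => by
        rw [← Matrix.mul_apply, hmC_sq B hB2, Matrix.one_apply_eq]
      simp [this]
    simp_rw [key, Finset.sum_add_distrib] at h4
    simpa using h4

lemma hm_pure (ρ A : Matrix ι ι ℂ) (hρ : ρ.PosSemidef) (htr : ρ.trace = 1) (hp : ρ * ρ = ρ) :
    (ρ * A * (ρ * A)).trace = (ρ * A).trace ^ 2 := by
  have hM := hρ.isHermitian
  set W := hM.eigenvectorUnitary with hWdef
  set D := hM.eigenvalues with hD
  have hs : ρ = (W : Matrix ι ι ℂ) *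
      diagonal (fun i => (D i : ℂ)) * star (W : Matrix ι ι ℂ) := by
    conv_lhs => rw [hM.spectral_theorem]
    rfl
  have hW := mem_unitaryGroup_iff'.1 W.2
  have hnn : ∀ i, 0 ≤ D i := hρ.eigenvalues_nonneg
  have hsum : ∑ i, D i = 1 := by
    have e1 : ρ.trace = ∑ i, (D i : ℂ) := by
      rw [hs, Matrix.trace_mul_comm, ← Matrix.mul_assoc, hW, Matrix.one_mul,
        Matrix.trace_diagonal]
    rw [htr] at e1
    exact_mod_cast e1.symm
  have hdiag : star (W : Matrix ι ι ℂ) * ρ * W = diagonal (fun i => (D i : ℂ)) := by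
    rw [hs]
    calc _ = (star (W : Matrix ι ι ℂ) * (W : Matrix ι ι ℂ)) * diagonal (fun i => (D i : ℂ)) *
            (star (W : Matrix ι ι ℂ) * (W : Matrix ι ι ℂ)) := by simp only [Matrix.mul_assoc]
        _ = _ := by rw [hW, Matrix.one_mul, Matrix.mul_one]
  have hid : ∀ i, D i * D i = D i := by
    have : diagonal (fun i => (D i : ℂ)) * diagonal (fun i => (D i : ℂ))
        = diagonal (fun i => (D i : ℂ)) := by
      rw [← hdiag]
      calc _ = star (W : Matrix ι ι ℂ) * ρ * (W * star (W : Matrix ι ι ℂ)) * ρ * W := by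
            simp only [Matrix.mul_assoc]
        _ = _ := by rw [mem_unitaryGroup_iff.1 W.2, Matrix.mul_one, Matrix.mul_assoc _ ρ ρ, hp]
    rw [diagonal_mul_diagonal] at this
    intro i
    have h := congrFun (diagonal_injective this) i
    exact_mod_cast h
  have hoff : ∀ i j, i ≠ j → D i * D j = 0 := by
    intro i j hij
    by_cases hi : D i = 0
    · simp [hi]
    · have h1 : D i = 1 := mul_left_cancel₀ hi (by rw [hid, mul_one])
      have h2 : D i + D j ≤ ∑ i, D i := by
        rw [← Finset.sum_pair hij]
        exact Finset.sum_le_sum_of_subset_of_nonneg (Finset.subset_univ _) fun i _ _ => hnn i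
      have h3 : D j = 0 := le_antisymm (by linarith) (hnn j)
      simp [h3]
  set A' := star (W : Matrix ι ι ℂ) * A * (W : Matrix ι ι ℂ) with hA'
  have t1 : (ρ * A).trace = ∑ i, (D i : ℂ) * A' i i := by
    conv_lhs => rw [hs]
    rw [hm_trconj, hm_trdiag]
  have t2 : (ρ * A * (ρ * A)).trace = ∑ i, ∑ j, (D i : ℂ) * D j * (A' i j * A' j i) := by
    have : (ρ * A * (ρ * A)).trace
        = (diagonal (fun i => (D i : ℂ)) * (A' * (diagonal (fun i => (D i : ℂ)) * A'))).trace := by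
      rw [Matrix.mul_assoc]
      conv_lhs => rw [hs]
      rw [hm_trconj]
      congr 2
      simp only [hA', Matrix.mul_assoc]
    rw [this, hm_trdiag]
    refine Finset.sum_congr rfl fun i _ => ?_
    rw [Matrix.mul_apply, Finset.mul_sum]
    refine Finset.sum_congr rfl fun j _ => ?_
    rw [diagonal_mul]; ring
  rw [t1, t2, sq, Finset.sum_mul_sum]
  refine Finset.sum_congr rfl fun i _ => Finset.sum_congr rfl fun j _ => ?_
  by_cases hij : i = j
  · subst hij; ring
  · have h : (D i : ℂ) * D j = 0 := by exact_mod_cast hoff i j hij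
    rw [h]; linear_combination -(A' i i * A' j j) * h

end Helpers

lemma hm_pauli_sq (a : Fin 4) : pauli a * pauli a = 1 := by
  fin_cases a <;> ext i j <;> fin_cases i <;> fin_cases j <;>
    simp [pauli, Matrix.mul_apply, Fin.sum_univ_two]

lemma hm_pauli_herm (a : Fin 4) (i j : Fin 2) : star (pauli a j i) = pauli a i j := by
  fin_cases a <;> fin_cases i <;> fin_cases j <;> simp [pauli]

lemma hm_pauli_tr (a : Fin 4) (ha : a ≠ 0) : ∑ i, pauli a i i = 0 := by
  fin_cases a <;> simp [pauli, Fin.sum_univ_two] at ha ⊢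

lemma hm_ps_sq {n : ℕ} (s : Fin n → Fin 4) : pauliString s * pauliString s = 1 := by
  ext i j
  rw [Matrix.mul_apply]
  simp only [pauliString, ← Finset.prod_mul_distrib]
  rw [← Fintype.piFinset_univ,
    ← Finset.prod_univ_sum (fun _ => Finset.univ)
      (fun q x => pauli (s q) (i q) x * pauli (s q) x (j q))]
  simp_rw [← Matrix.mul_apply, hm_pauli_sq]
  by_cases h : i = j
  · subst h; simp
  · obtain ⟨q, hq⟩ := Function.ne_iff.1 h
    rw [Matrix.one_apply_ne h]
    exact Finset.prod_eq_zero (Finset.mem_univ q) (Matrix.one_apply_ne hq)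

lemma hm_ps_tr {n : ℕ} (s : Fin n → Fin 4) (hs : ∃ q, s q ≠ 0) : (pauliString s).trace = 0 := by
  obtain ⟨q, hq⟩ := hs
  simp only [Matrix.trace, Matrix.diag, pauliString]
  rw [← Fintype.piFinset_univ,
    ← Finset.prod_univ_sum (fun _ => Finset.univ) (fun q x => pauli (s q) x x)]
  exact Finset.prod_eq_zero (Finset.mem_univ q) (hm_pauli_tr _ hq)

lemma hm_ps_herm {n : ℕ} (s : Fin n → Fin 4) : (pauliString s).IsHermitian := by
  ext i j
  simp only [conjTranspose_apply, pauliString, star_prod, hm_pauli_herm]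

/-- half anticommutator -/
noncomputable def hmM {ι : Type*} [Fintype ι] (ρ A : Matrix ι ι ℂ) : Matrix ι ι ℂ :=
  (1 / 2 : ℂ) • (ρ * A + A * ρ)

lemma hmM_herm {ι : Type*} [Fintype ι] (ρ A : Matrix ι ι ℂ) (h : ρ.IsHermitian)
    (h' : A.IsHermitian) : (hmM ρ A).IsHermitian := by
  unfold hmM IsHermitian
  rw [conjTranspose_smul, conjTranspose_add, conjTranspose_mul, conjTranspose_mul, h.eq, h'.eq,
    add_comm]
  simp

lemma hmC_herm {ι : Type*} [Fintype ι] [DecidableEq ι] (B : Matrix ι ι ℂ) (h : B.IsHermitian)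
    (V : unitaryGroup ι ℂ) : (hmC B V).IsHermitian := by
  unfold hmC IsHermitian
  simp [star_eq_conjTranspose, h.eq, Matrix.mul_assoc]

lemma hm_ald {n : ℕ} (s : Fin n → Fin 4) (ρ : Matrix (Fin n → Fin 2) (Fin n → Fin 2) ℂ)
    (U V : unitaryGroup (Fin n → Fin 2) ℂ) :
    aldTerm s ρ U V = (hmM ρ (hmC (pauliString s) U) * hmC (pauliString s) V).trace := by
  change (1 / 2 : ℂ) * (ρ * (hmC (pauliString s) U * hmC (pauliString s) V +
    hmC (pauliString s) V * hmC (pauliString s) U)).trace = _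
  generalize hmC (pauliString s) U = A
  generalize hmC (pauliString s) V = C
  unfold hmM
  rw [Matrix.smul_mul, Matrix.trace_smul, smul_eq_mul, Matrix.mul_add, Matrix.add_mul,
    Matrix.trace_add, Matrix.trace_add, Matrix.mul_assoc ρ A C, ← Matrix.mul_assoc ρ C A,
    Matrix.trace_mul_comm (ρ * C) A, Matrix.mul_assoc A ρ C]

/-- For a nonidentity Pauli string `B` on `n` qubits, a pure state `ρ₀`,
and independent Haar-random `U, V ∈ U(2ⁿ)`, the quantity
`X(U,V) = (1/2)Tr[ρ₀ {U† B U, V† B V}]` satisfies `E[X] = 0` and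
`E[X²] = (2ⁿ/(2(2^{2n}−1)))·(1 + (2ⁿ−2)/(2ⁿ(2ⁿ+1)))`. -/
theorem haar_moments_ald_kernel_term (n : ℕ) (s : Fin n → Fin 4)
    (hs : ∃ q, s q ≠ 0)
    [MeasurableSpace (Matrix.unitaryGroup (Fin n → Fin 2) ℂ)]
    [BorelSpace (Matrix.unitaryGroup (Fin n → Fin 2) ℂ)]
    (μ : Measure (Matrix.unitaryGroup (Fin n → Fin 2) ℂ))
    [μ.IsHaarMeasure] [IsProbabilityMeasure μ]
    (ρ₀ : Matrix (Fin n → Fin 2) (Fin n → Fin 2) ℂ)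
    (hρ : ρ₀.PosSemidef) (hρtr : ρ₀.trace = 1) (hρpure : ρ₀ * ρ₀ = ρ₀) :
    (∫ p : Matrix.unitaryGroup (Fin n → Fin 2) ℂ × Matrix.unitaryGroup (Fin n → Fin 2) ℂ,
        aldTerm s ρ₀ (p.1 : _) (p.2 : _) ∂(μ.prod μ)) = 0 ∧
    (∫ p : Matrix.unitaryGroup (Fin n → Fin 2) ℂ × Matrix.unitaryGroup (Fin n → Fin 2) ℂ,
        (aldTerm s ρ₀ (p.1 : _) (p.2 : _)) ^ 2 ∂(μ.prod μ))
      = ((2 : ℂ) ^ n / (2 * ((2 : ℂ) ^ (2 * n) - 1))) *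
          (1 + ((2 : ℂ) ^ n - 2) / ((2 : ℂ) ^ n * ((2 : ℂ) ^ n + 1))) := by
  have := hm_compact (ι := Fin n → Fin 2)
  have := hm_second (ι := Fin n → Fin 2)
  obtain ⟨q0, hq0⟩ := id hs
  have : Nonempty (Fin n) := ⟨q0⟩
  set B := pauliString s with hBdef
  have hB0 : B.trace = 0 := hm_ps_tr s hs
  have hB2 : B * B = 1 := hm_ps_sq s
  have hBh : B.IsHermitian := hm_ps_herm s
  have hc := hmC_cont B
  have cont : Continuous (fun p : unitaryGroup (Fin n → Fin 2) ℂ × unitaryGroup (Fin n → Fin 2) ℂ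
      => (hmM ρ₀ (hmC B p.1) * hmC B p.2).trace) := by
    unfold hmM; fun_prop
  have int1 : ∀ f : unitaryGroup (Fin n → Fin 2) ℂ × unitaryGroup (Fin n → Fin 2) ℂ → ℂ,
      Continuous f → Integrable f (μ.prod μ) := fun f hf =>
    hf.integrable_of_hasCompactSupport (HasCompactSupport.of_compactSpace f)
  have hMh : ∀ U, (hmM ρ₀ (hmC B U)).IsHermitian := fun U =>
    hmM_herm _ _ hρ.isHermitian (hmC_herm B hBh U)
  simp_rw [hm_ald]
  constructor
  · rw [integral_prod _ (int1 _ cont)]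
    simp only [hm_first μ B hB0 _ (hMh _), integral_zero]
  · obtain ⟨p, q, hpq, h1, h2⟩ := hm_pq μ B hB0 hB2
    have cont2 : Continuous (fun p : unitaryGroup (Fin n → Fin 2) ℂ ×
        unitaryGroup (Fin n → Fin 2) ℂ => (hmM ρ₀ (hmC B p.1) * hmC B p.2).trace ^ 2) :=
      cont.pow 2
    rw [← hBdef, integral_prod _ (int1 _ cont2)]
    simp only [hpq _ (hMh _)]
    have e1 : ∀ A : Matrix (Fin n → Fin 2) (Fin n → Fin 2) ℂ,
        (hmM ρ₀ A).trace = (ρ₀ * A).trace := by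
      intro A
      unfold hmM
      rw [Matrix.trace_smul, Matrix.trace_add, Matrix.trace_mul_comm A ρ₀, smul_eq_mul]
      ring
    have e2 : ∀ A : Matrix (Fin n → Fin 2) (Fin n → Fin 2) ℂ, A * A = 1 →
        (hmM ρ₀ A * hmM ρ₀ A).trace = 1 / 2 * (ρ₀ * A).trace ^ 2 + 1 / 2 := by
      intro A hA
      unfold hmM
      rw [Matrix.smul_mul, Matrix.mul_smul, Matrix.trace_smul, Matrix.trace_smul,
        Matrix.mul_add, Matrix.add_mul, Matrix.add_mul, Matrix.trace_add, Matrix.trace_add,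
        Matrix.trace_add, hm_pure ρ₀ A hρ hρtr hρpure]
      have t1 : (A * ρ₀ * (ρ₀ * A)).trace = 1 := by
        rw [Matrix.trace_mul_comm, Matrix.mul_assoc, ← Matrix.mul_assoc A A, hA, Matrix.one_mul,
          hρpure, hρtr]
      have t2 : (ρ₀ * A * (A * ρ₀)).trace = 1 := by
        rw [Matrix.mul_assoc, ← Matrix.mul_assoc A A, hA, Matrix.one_mul, hρpure, hρtr]
      have t3 : (A * ρ₀ * (A * ρ₀)).trace = (ρ₀ * A).trace ^ 2 := by
        rw [← hm_pure ρ₀ A hρ hρtr hρpure, Matrix.mul_assoc, Matrix.trace_mul_comm]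
        simp only [Matrix.mul_assoc]
      rw [t1, t2, t3]
      simp only [smul_eq_mul]
      ring
    simp only [e1, e2 _ (hmC_sq B hB2 _)]
    have e3 : ∀ U, p * (1 / 2 * (ρ₀ * hmC B U).trace ^ 2 + 1 / 2) + q * (ρ₀ * hmC B U).trace ^ 2
        = (p / 2 + q) * (ρ₀ * hmC B U).trace ^ 2 + p / 2 := fun U => by ring
    simp only [e3]
    rw [integral_add ((hm_integrable μ _ (by fun_prop)).const_mul _) (integrable_const _),
      integral_const_mul, hpq ρ₀ hρ.isHermitian, hρpure, hρtr]
    simp only [integral_const, probReal_univ, one_smul]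
    have hcard : (Fintype.card (Fin n → Fin 2) : ℂ) = 2 ^ n := by simp
    rw [hcard] at h1 h2
    have hn : n ≠ 0 := by rintro rfl; exact q0.elim0
    have hd0 : (2 : ℂ) ^ n ≠ 0 := by positivity
    have hdgt : (1 : ℝ) < 2 ^ n := one_lt_pow₀ (by norm_num) hn
    have hd1 : (2 : ℂ) ^ n - 1 ≠ 0 := by
      have : ((2 : ℝ) ^ n - 1) ≠ 0 := by linarith
      exact_mod_cast this
    have hd2 : (2 : ℂ) ^ n + 1 ≠ 0 := by
      have : ((2 : ℝ) ^ n + 1) ≠ 0 := by linarith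
      exact_mod_cast this
    have hpow : (2 : ℂ) ^ (2 * n) = (2 ^ n) ^ 2 := by rw [mul_comm, pow_mul]
    rw [hpow]
    generalize (2 : ℂ) ^ n = d at *
    have hd3 : d ^ 2 - 1 ≠ 0 := by
      have : d ^ 2 - 1 = (d - 1) * (d + 1) := by ring
      rw [this]; exact mul_ne_zero hd1 hd2
    have hp : p = -q * d := by linear_combination h1
    have hq : q = -1 / (d ^ 2 - 1) := by
      rw [eq_div_iff hd3]
      linear_combination d * hp - h2
    rw [hp, hq]
    have hd4 : d ^ 2 - 1 = (d - 1) * (d + 1) := by ring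
    rw [hd4]
    field_simp
    ring
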